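/- arXiv:2202.13579 — 2 statements merged into one kernel-verified Lean document; each statement's English description precedes it below -/
import Mathlib

section
/- For random vectors U ∈ ℝ^p and V ∈ ℝ^q with E(|U| + |V|) < ∞, the squared distance covariance V²(U,V) = E|U−U'||V−V'| + E|U−U'|·E|V−V'| − E|U−U'||V−V''| − E|U−U''||V−V'| is nonnegative, where (U,V), (U',V'), (U'',V'') are i.i.d. copies. -/
open MeasureTheory ProbabilityTheory

/-- Squared distance covariance of two random elements, via the moment formula with
independent copies realized as product measures. -/
noncomputable def dcov2 {Ω E F : Type*} [MeasurableSpace Ω]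
    [NormedAddCommGroup E] [NormedAddCommGroup F]
    (μ : Measure Ω) (U : Ω → E) (V : Ω → F) : ℝ :=
  (∫ ω, ‖U ω.1 - U ω.2‖ * ‖V ω.1 - V ω.2‖ ∂(μ.prod μ))
  + (∫ ω, ‖U ω.1 - U ω.2‖ ∂(μ.prod μ)) * (∫ ω, ‖V ω.1 - V ω.2‖ ∂(μ.prod μ))
  - (∫ ω, ‖U ω.1 - U ω.2.1‖ * ‖V ω.1 - V ω.2.2‖ ∂(μ.prod (μ.prod μ)))
  - (∫ ω, ‖U ω.1 - U ω.2.2‖ * ‖V ω.1 - V ω.2.1‖ ∂(μ.prod (μ.prod μ)))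

/-!
The distance of two points is, up to a constant, the measure of the set of hyperplanes separating
them (Crofton's formula). Since the squared distance covariance is bilinear in the two distance
kernels, it is therefore a mixture of the values obtained when `U` and `V` are replaced by the
indicators of `U ∈ H` and `V ∈ K` for half-spaces `H` and `K`, and such a value is `4` times a
squared covariance.

The moment `E |U - U'| |V - V'|` may be infinite, and its Bochner integral is then `0`; by the
triangle inequality the two subtracted integrals are then `0` for the same reason.
-/

open scoped ENNReal RealInnerProductSpace

section Kernel

variable {Ω : Type*} [MeasurableSpace Ω]

/-- The row mean `x ↦ E d(x, X)` of a kernel `d`, where `X` has law `μ`. -/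
noncomputable def rowMean (μ : Measure Ω) (d : Ω × Ω → ℝ≥0∞) (x : Ω) : ℝ≥0∞ :=
  ∫⁻ y, d (x, y) ∂μ

/-- Nonnegativity of the squared distance covariance of two kernels `d` and `e`, with the negative
terms moved to the left so that it makes sense in `ℝ≥0∞`. Both negative terms equal the integral of
the product of the row means. -/
def HasNonnegDcov (μ : Measure Ω) (d e : Ω × Ω → ℝ≥0∞) : Prop :=
  2 * ∫⁻ x, rowMean μ d x * rowMean μ e x ∂μ ≤
    ∫⁻ p, d p * e p ∂(μ.prod μ) + (∫⁻ p, d p ∂(μ.prod μ)) * ∫⁻ p, e p ∂(μ.prod μ)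

variable {μ : Measure Ω} {d e : Ω × Ω → ℝ≥0∞}

theorem HasNonnegDcov.symm (h : HasNonnegDcov μ d e) : HasNonnegDcov μ e d := by
  simpa only [HasNonnegDcov, mul_comm] using h

section SFinite

variable [SFinite μ]

theorem measurable_rowMean (hd : Measurable d) : Measurable (rowMean μ d) :=
  hd.lintegral_prod_right'

theorem lintegral_rowMean (hd : Measurable d) :
    ∫⁻ x, rowMean μ d x ∂μ = ∫⁻ p, d p ∂(μ.prod μ) :=
  (lintegral_prod _ hd.aemeasurable).symm

theorem lintegral_rowMean_mul (hd : Measurable d) {w : Ω → ℝ≥0∞} (hw : Measurable w) :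
    ∫⁻ x, rowMean μ d x * w x ∂μ = ∫⁻ p, d p * w p.1 ∂(μ.prod μ) := by
  rw [lintegral_prod _ (by fun_prop)]
  refine lintegral_congr fun x => ?_
  exact (lintegral_mul_const _ (by fun_prop)).symm

theorem lintegral_mul_prod_prod (hd : Measurable d) (he : Measurable e) :
    ∫⁻ ω, d (ω.1, ω.2.1) * e (ω.1, ω.2.2) ∂(μ.prod (μ.prod μ)) =
      ∫⁻ x, rowMean μ d x * rowMean μ e x ∂μ := by
  rw [lintegral_prod _ (by fun_prop)]
  exact lintegral_congr fun x => lintegral_prod_mul (f := fun y => d (x, y))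
    (g := fun z => e (x, z)) (by fun_prop) (by fun_prop)

theorem lintegral_lintegral_mul {S X : Type*} [MeasurableSpace S] [MeasurableSpace X]
    {ν : Measure S} [SFinite ν] {ρ : Measure X} [SFinite ρ] {k : S → X → ℝ≥0∞} {w : X → ℝ≥0∞}
    (hk : Measurable (Function.uncurry k)) (hw : Measurable w) :
    ∫⁻ p, (∫⁻ s, k s p ∂ν) * w p ∂ρ = ∫⁻ s, ∫⁻ p, k s p * w p ∂ρ ∂ν := by
  rw [lintegral_lintegral_swap (by fun_prop)]
  refine lintegral_congr fun p => ?_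
  rw [lintegral_mul_const _ (by fun_prop)]

theorem HasNonnegDcov.lintegral_left {S : Type*} [MeasurableSpace S] {ν : Measure S} [SFinite ν]
    {k : S → Ω × Ω → ℝ≥0∞} (hk : Measurable (Function.uncurry k)) (he : Measurable e)
    (h : ∀ s, HasNonnegDcov μ (k s) e) : HasNonnegDcov μ (fun p => ∫⁻ s, k s p ∂ν) e := by
  have hks (s : S) : Measurable (k s) := by fun_prop
  have hK : Measurable fun p => ∫⁻ s, k s p ∂ν := hk.lintegral_prod_left'
  have he' : Measurable (rowMean μ e) := measurable_rowMean he
  have linear_form (s : S) : 2 * ∫⁻ p, k s p * rowMean μ e p.1 ∂(μ.prod μ) ≤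
      ∫⁻ p, k s p * e p ∂(μ.prod μ) + ∫⁻ p, k s p * (∫⁻ p, e p ∂(μ.prod μ)) ∂(μ.prod μ) := by
    rw [← lintegral_rowMean_mul (hks s) he', lintegral_mul_const _ (hks s)]
    exact h s
  rw [HasNonnegDcov, lintegral_rowMean_mul hK he', ← lintegral_mul_const _ hK,
    lintegral_lintegral_mul hk (by fun_prop), lintegral_lintegral_mul hk he,
    lintegral_lintegral_mul hk measurable_const, ← lintegral_add_left (by fun_prop),
    ← lintegral_const_mul _ (by fun_prop)]
  exact lintegral_mono linear_form

end SFinite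

section Probability

variable [IsProbabilityMeasure μ]

theorem le_rowMean_add_rowMean (hd : Measurable d)
    (triangle : ∀ x y z, d (x, y) ≤ d (x, z) + d (y, z)) (x y : Ω) :
    d (x, y) ≤ rowMean μ d x + rowMean μ d y :=
  calc d (x, y) = ∫⁻ _, d (x, y) ∂μ := by simp
    _ ≤ ∫⁻ z, d (x, z) + d (y, z) ∂μ := lintegral_mono fun z => triangle x y z
    _ = rowMean μ d x + rowMean μ d y := lintegral_add_left (by fun_prop) _

theorem lintegral_mul_le_of_triangle (hd : Measurable d) (he : Measurable e)
    (d_triangle : ∀ x y z, d (x, y) ≤ d (x, z) + d (y, z))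
    (e_triangle : ∀ x y z, e (x, y) ≤ e (x, z) + e (y, z)) :
    ∫⁻ p, d p * e p ∂(μ.prod μ) ≤ 2 * (∫⁻ x, rowMean μ d x * rowMean μ e x ∂μ +
      (∫⁻ p, d p ∂(μ.prod μ)) * ∫⁻ p, e p ∂(μ.prod μ)) := by
  rw [← lintegral_rowMean hd, ← lintegral_rowMean he]
  have hφ := measurable_rowMean (μ := μ) hd
  have hψ := measurable_rowMean (μ := μ) he
  set φ := rowMean μ d
  set ψ := rowMean μ e
  have diagonal_fst : ∫⁻ p : Ω × Ω, φ p.1 * ψ p.1 ∂(μ.prod μ) = ∫⁻ x, φ x * ψ x ∂μ :=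
    measurePreserving_fst.lintegral_comp (hφ.mul hψ)
  have diagonal_snd : ∫⁻ p : Ω × Ω, φ p.2 * ψ p.2 ∂(μ.prod μ) = ∫⁻ x, φ x * ψ x ∂μ :=
    measurePreserving_snd.lintegral_comp (hφ.mul hψ)
  calc ∫⁻ p, d p * e p ∂(μ.prod μ)
      ≤ ∫⁻ p, (φ p.1 + φ p.2) * (ψ p.1 + ψ p.2) ∂(μ.prod μ) :=
        lintegral_mono fun p => mul_le_mul' (le_rowMean_add_rowMean hd d_triangle p.1 p.2)
          (le_rowMean_add_rowMean he e_triangle p.1 p.2)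
    _ = ∫⁻ p, φ p.1 * ψ p.1 + φ p.2 * ψ p.2 + (φ p.1 * ψ p.2 + ψ p.1 * φ p.2) ∂(μ.prod μ) :=
        lintegral_congr fun p => by ring
    _ = 2 * (∫⁻ x, φ x * ψ x ∂μ + (∫⁻ x, φ x ∂μ) * ∫⁻ x, ψ x ∂μ) := by
        rw [lintegral_add_left (by fun_prop), lintegral_add_left (by fun_prop),
          lintegral_add_left (by fun_prop), diagonal_fst, diagonal_snd,
          lintegral_prod_mul hφ.aemeasurable hψ.aemeasurable,
          lintegral_prod_mul hψ.aemeasurable hφ.aemeasurable]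
        ring

end Probability

end Kernel

section Cut

/-- The cut metric of a set `A`: it is `1` on pairs separated by `A` and `0` otherwise. -/
noncomputable def cutKernel {X : Type*} (A : Set X) (p : X × X) : ℝ≥0∞ :=
  A.indicator 1 p.1 * Aᶜ.indicator 1 p.2 + Aᶜ.indicator 1 p.1 * A.indicator 1 p.2

variable {Ω : Type*} [MeasurableSpace Ω] {A B : Set Ω}

theorem measurable_uncurry_cutKernel {S : Type*} [MeasurableSpace S] {A : S → Set Ω}
    (hA : MeasurableSet {q : S × Ω | q.2 ∈ A q.1}) :
    Measurable (Function.uncurry fun s => cutKernel (A s)) := by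
  have measurable_comp {f : S × Ω × Ω → S × Ω} (hf : Measurable f) :
      Measurable (fun q => (A (f q).1).indicator (1 : Ω → ℝ≥0∞) (f q).2) ∧
      Measurable (fun q => (A (f q).1)ᶜ.indicator (1 : Ω → ℝ≥0∞) (f q).2) :=
    ⟨(measurable_one.indicator hA).comp hf, (measurable_one.indicator hA.compl).comp hf⟩
  have fst := measurable_comp (f := fun q => (q.1, q.2.1)) (by fun_prop)
  have snd := measurable_comp (f := fun q => (q.1, q.2.2)) (by fun_prop)
  exact (fst.1.mul snd.2).add (fst.2.mul snd.1)

theorem measurable_cutKernel (hA : MeasurableSet A) : Measurable (cutKernel A) :=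
  (measurable_uncurry_cutKernel (S := Unit) (A := fun _ => A)
    (measurable_snd hA)).comp (measurable_prodMk_left (x := ()))

variable {μ : Measure Ω}

theorem rowMean_cutKernel (hA : MeasurableSet A) (x : Ω) :
    rowMean μ (cutKernel A) x = A.indicator 1 x * μ Aᶜ + Aᶜ.indicator 1 x * μ A := by
  have hA' := measurable_one.indicator (β := ℝ≥0∞) hA
  have hA'' := measurable_one.indicator (β := ℝ≥0∞) hA.compl
  simp only [rowMean, cutKernel]
  rw [lintegral_add_left (by fun_prop), lintegral_const_mul _ hA'', lintegral_const_mul _ hA',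
    lintegral_indicator_one hA, lintegral_indicator_one hA.compl]

theorem lintegral_indicator_one_mul_indicator_one {X Y : Type*} [MeasurableSpace X]
    [MeasurableSpace Y] {μ : Measure X} {ν : Measure Y} [SFinite ν] {A : Set X} {B : Set Y}
    (hA : MeasurableSet A) (hB : MeasurableSet B) :
    ∫⁻ p, A.indicator 1 p.1 * B.indicator 1 p.2 ∂(μ.prod ν) = μ A * ν B := by
  rw [lintegral_prod_mul (measurable_one.indicator hA).aemeasurable
    (measurable_one.indicator hB).aemeasurable, lintegral_indicator_one hA,
    lintegral_indicator_one hB]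

theorem lintegral_cutKernel [SFinite μ] (hA : MeasurableSet A) :
    ∫⁻ p, cutKernel A p ∂(μ.prod μ) = 2 * (μ A * μ Aᶜ) := by
  have := measurable_one.indicator (β := ℝ≥0∞) hA
  have := measurable_one.indicator (β := ℝ≥0∞) hA.compl
  simp only [cutKernel]
  rw [lintegral_add_left (by fun_prop), lintegral_indicator_one_mul_indicator_one hA hA.compl,
    lintegral_indicator_one_mul_indicator_one hA.compl hA]
  ring

theorem lintegral_cutKernel_mul_cutKernel [SFinite μ] (hA : MeasurableSet A)
    (hB : MeasurableSet B) :
    ∫⁻ p, cutKernel A p * cutKernel B p ∂(μ.prod μ) =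
      2 * (μ (A ∩ B) * μ (Aᶜ ∩ Bᶜ) + μ (A ∩ Bᶜ) * μ (Aᶜ ∩ B)) := by
  have measurable_cell {C D : Set Ω} (hC : MeasurableSet C) (hD : MeasurableSet D) :
      Measurable fun p : Ω × Ω => C.indicator (1 : Ω → ℝ≥0∞) p.1 * D.indicator 1 p.2 :=
    ((measurable_one.indicator hC).comp measurable_fst).mul
      ((measurable_one.indicator hD).comp measurable_snd)
  have h₁₁ := hA.inter hB
  have h₁₀ := hA.inter hB.compl
  have h₀₁ := hA.compl.inter hB
  have h₀₀ := hA.compl.inter hB.compl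
  have expand (p : Ω × Ω) : cutKernel A p * cutKernel B p =
      (A ∩ B).indicator 1 p.1 * (Aᶜ ∩ Bᶜ).indicator 1 p.2 +
      (Aᶜ ∩ Bᶜ).indicator 1 p.1 * (A ∩ B).indicator 1 p.2 +
      (A ∩ Bᶜ).indicator 1 p.1 * (Aᶜ ∩ B).indicator 1 p.2 +
      (Aᶜ ∩ B).indicator 1 p.1 * (A ∩ Bᶜ).indicator 1 p.2 := by
    simp only [cutKernel, Set.inter_indicator_one, Pi.mul_apply]
    ring
  simp only [expand]
  rw [lintegral_add_right _ (measurable_cell h₀₁ h₁₀),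
    lintegral_add_right _ (measurable_cell h₁₀ h₀₁),
    lintegral_add_right _ (measurable_cell h₀₀ h₁₁),
    lintegral_indicator_one_mul_indicator_one h₁₁ h₀₀,
    lintegral_indicator_one_mul_indicator_one h₀₀ h₁₁,
    lintegral_indicator_one_mul_indicator_one h₁₀ h₀₁,
    lintegral_indicator_one_mul_indicator_one h₀₁ h₁₀]
  ring

theorem lintegral_rowMean_cutKernel_mul (hA : MeasurableSet A) (hB : MeasurableSet B) :
    ∫⁻ x, rowMean μ (cutKernel A) x * rowMean μ (cutKernel B) x ∂μ =
      μ (A ∩ B) * (μ Aᶜ * μ Bᶜ) + μ (A ∩ Bᶜ) * (μ Aᶜ * μ B) +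
      μ (Aᶜ ∩ B) * (μ A * μ Bᶜ) + μ (Aᶜ ∩ Bᶜ) * (μ A * μ B) := by
  have measurable_cell {C : Set Ω} (hC : MeasurableSet C) (c : ℝ≥0∞) :
      Measurable fun x => C.indicator 1 x * c := (measurable_one.indicator hC).mul_const c
  have lintegral_cell {C : Set Ω} (hC : MeasurableSet C) (c : ℝ≥0∞) :
      ∫⁻ x, C.indicator 1 x * c ∂μ = μ C * c := by
    rw [lintegral_mul_const _ (measurable_one.indicator hC), lintegral_indicator_one hC]
  have h₁₁ := hA.inter hB
  have h₁₀ := hA.inter hB.compl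
  have h₀₁ := hA.compl.inter hB
  have h₀₀ := hA.compl.inter hB.compl
  have expand (x : Ω) : rowMean μ (cutKernel A) x * rowMean μ (cutKernel B) x =
      (A ∩ B).indicator 1 x * (μ Aᶜ * μ Bᶜ) + (A ∩ Bᶜ).indicator 1 x * (μ Aᶜ * μ B) +
      (Aᶜ ∩ B).indicator 1 x * (μ A * μ Bᶜ) + (Aᶜ ∩ Bᶜ).indicator 1 x * (μ A * μ B) := by
    simp only [rowMean_cutKernel hA, rowMean_cutKernel hB, Set.inter_indicator_one, Pi.mul_apply]
    ring
  simp only [expand]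
  rw [lintegral_add_right _ (measurable_cell h₀₀ _), lintegral_add_right _ (measurable_cell h₀₁ _),
    lintegral_add_right _ (measurable_cell h₁₀ _), lintegral_cell h₁₁, lintegral_cell h₁₀,
    lintegral_cell h₀₁, lintegral_cell h₀₀]

-- For a `2 × 2` probability table the difference of the two sides is `4 * (p * s - q * r) ^ 2`,
-- four times the squared covariance of the two indicators.
theorem two_mul_cross_le_of_add_eq_one {p q r s : ℝ≥0∞} (h : p + q + (r + s) = 1) :
    2 * (p * ((r + s) * (q + s)) + q * ((r + s) * (p + r)) +
        r * ((p + q) * (q + s)) + s * ((p + q) * (p + r))) ≤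
      2 * (p * s + q * r) +
        2 * ((p + q) * (r + s)) * (2 * ((p + r) * (q + s))) := by
  have ne_top : p + q + (r + s) ≠ ∞ := h ▸ ENNReal.one_ne_top
  simp only [ENNReal.add_ne_top] at ne_top
  obtain ⟨⟨hp, hq⟩, hr, hs⟩ := ne_top
  lift p to NNReal using hp
  lift q to NNReal using hq
  lift r to NNReal using hr
  lift s to NNReal using hs
  norm_cast at h ⊢
  rw [← NNReal.coe_le_coe]
  have hs : (s : ℝ) = 1 - p - q - r := by
    rw [eq_sub_iff_add_eq, eq_sub_iff_add_eq, eq_sub_iff_add_eq]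
    exact_mod_cast (by rw [← h]; ring : s + r + q + p = 1)
  push_cast
  rw [hs]
  linarith [sq_nonneg ((p : ℝ) * (1 - p - q - r) - q * r)]

theorem hasNonnegDcov_cutKernel [IsProbabilityMeasure μ] (hA : MeasurableSet A)
    (hB : MeasurableSet B) : HasNonnegDcov μ (cutKernel A) (cutKernel B) := by
  have split (C : Set Ω) {D : Set Ω} (hD : MeasurableSet D) : μ C = μ (C ∩ D) + μ (C ∩ Dᶜ) := by
    rw [← Set.sdiff_eq, measure_inter_add_sdiff C hD]
  have total : μ (A ∩ B) + μ (A ∩ Bᶜ) + (μ (Aᶜ ∩ B) + μ (Aᶜ ∩ Bᶜ)) = 1 := by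
    rw [← split A hB, ← split Aᶜ hB, measure_add_measure_compl hA, measure_univ]
  have hBA : μ B = μ (A ∩ B) + μ (Aᶜ ∩ B) := by
    simpa only [Set.inter_comm] using split B hA
  have hBA' : μ Bᶜ = μ (A ∩ Bᶜ) + μ (Aᶜ ∩ Bᶜ) := by
    simpa only [Set.inter_comm] using split Bᶜ hA
  rw [HasNonnegDcov, lintegral_rowMean_cutKernel_mul hA hB, lintegral_cutKernel_mul_cutKernel hA hB,
    lintegral_cutKernel hA, lintegral_cutKernel hB, hBA, hBA', split A hB, split Aᶜ hB]
  exact two_mul_cross_le_of_add_eq_one total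

theorem hasNonnegDcov_lintegral_cutKernel [IsProbabilityMeasure μ] {S T : Type*}
    [MeasurableSpace S] [MeasurableSpace T] {ν : Measure S} {τ : Measure T} [SFinite ν] [SFinite τ]
    {A : S → Set Ω} {B : T → Set Ω} (hA : MeasurableSet {q : S × Ω | q.2 ∈ A q.1})
    (hB : MeasurableSet {q : T × Ω | q.2 ∈ B q.1}) :
    HasNonnegDcov μ (fun p => ∫⁻ s, cutKernel (A s) p ∂ν)
      (fun p => ∫⁻ t, cutKernel (B t) p ∂τ) := by
  have hAs (s : S) : MeasurableSet (A s) := measurable_prodMk_left hA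
  have hBt (t : T) : MeasurableSet (B t) := measurable_prodMk_left hB
  have hkB := measurable_uncurry_cutKernel hB
  refine HasNonnegDcov.lintegral_left (measurable_uncurry_cutKernel hA)
    hkB.lintegral_prod_left' fun s => .symm ?_
  exact HasNonnegDcov.lintegral_left hkB (measurable_cutKernel (hAs s))
    fun t => hasNonnegDcov_cutKernel (hBt t) (hAs s)

end Cut

section Crofton

variable {E : Type*} [NormedAddCommGroup E] [InnerProductSpace ℝ E]

/-- The open half-space `{x | t < ⟪θ, x⟫}` for `s = (θ, t)`; pairs `(θ, t)` parametrize the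
oriented hyperplanes of `E` (together with the degenerate case `θ = 0`). -/
def halfSpace (s : E × ℝ) : Set E := {x | s.2 < ⟪s.1, x⟫}

theorem lintegral_cutKernel_Ioi (u v : ℝ) :
    ∫⁻ t, cutKernel (Set.Ioi t) (u, v) = edist u v := by
  have separated (t : ℝ) : cutKernel (Set.Ioi t) (u, v) =
      (Set.Ico (min u v) (max u v)).indicator 1 t := by
    rcases lt_or_ge t u with hu | hu <;> rcases lt_or_ge t v with hv | hv <;>
      simp [cutKernel, hu, hv, not_lt_of_ge, not_le_of_gt]
  simp only [separated]
  rw [lintegral_indicator_one measurableSet_Ico, Real.volume_Ico, max_sub_min_eq_abs',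
    edist_dist, Real.dist_eq]

variable [MeasurableSpace E] [BorelSpace E]

theorem measurableSet_mem_halfSpace [SecondCountableTopology E] {Ω : Type*} [MeasurableSpace Ω]
    {U : Ω → E} (hU : Measurable U) :
    MeasurableSet {q : (E × ℝ) × Ω | q.2 ∈ U ⁻¹' halfSpace q.1} :=
  measurableSet_lt (f := fun q : (E × ℝ) × Ω => q.1.2) (g := fun q => ⟪q.1.1, U q.2⟫)
    (by fun_prop) (by fun_prop)

variable [FiniteDimensional ℝ E]

theorem stdGaussian_map_inner (x : E) :
    (stdGaussian E).map (fun θ => ⟪θ, x⟫) = (gaussianReal 0 1).map (fun t => ‖x‖ * t) := by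
  have := IsGaussian.map_eq_gaussianReal (μ := stdGaussian E) (innerSL ℝ x)
  rw [integral_strongDual_stdGaussian, variance_dual_stdGaussian, innerSL_apply_norm] at this
  rw [gaussianReal_map_const_mul]
  convert this using 2
  · exact funext fun θ => real_inner_comm x θ
  · rw [mul_zero]
  · rw [mul_one, Real.toNNReal_of_nonneg (sq_nonneg _)]

theorem lintegral_enorm_inner_stdGaussian (x : E) :
    ∫⁻ θ, ‖⟪θ, x⟫‖ₑ ∂(stdGaussian E) = ‖x‖ₑ * ∫⁻ t, ‖t‖ₑ ∂(gaussianReal 0 1) := by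
  rw [← lintegral_map (f := fun t : ℝ => ‖t‖ₑ) (by fun_prop) (by fun_prop), stdGaussian_map_inner,
    lintegral_map (by fun_prop) (by fun_prop)]
  simp only [enorm_mul, enorm_norm]
  exact lintegral_const_mul _ (by fun_prop)

theorem lintegral_enorm_gaussianReal_ne_zero : ∫⁻ t, ‖t‖ₑ ∂(gaussianReal 0 1) ≠ 0 := by
  intro h
  rw [lintegral_eq_zero_iff (by fun_prop)] at h
  have := nullSingletonClass_gaussianReal (μ := 0) (v := 1) one_ne_zero
  obtain ⟨t, ht, ht'⟩ := (h.and (Measure.ae_ne (gaussianReal 0 1) 0)).exists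
  exact ht' (enorm_eq_zero.1 ht)

theorem lintegral_enorm_gaussianReal_ne_top : ∫⁻ t, ‖t‖ₑ ∂(gaussianReal 0 1) ≠ ∞ :=
  (memLp_one_iff_integrable.1 (memLp_id_gaussianReal 1)).2.ne

-- For a Gaussian direction `θ` and Lebesgue offset `t`, the hyperplanes separating `x` and `y` have
-- measure `E |⟪θ, x - y⟫|`, which by rotation invariance is a multiple of `‖x - y‖`.
variable (E) in
theorem exists_edist_eq_lintegral_cutKernel_halfSpace :
    ∃ ν : Measure (E × ℝ), SFinite ν ∧
      ∀ x y : E, edist x y = ∫⁻ s, cutKernel (halfSpace s) (x, y) ∂ν := by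
  set c := ∫⁻ t, ‖t‖ₑ ∂(gaussianReal 0 1)
  refine ⟨c⁻¹ • (stdGaussian E).prod volume, inferInstance, fun x y => ?_⟩
  have hk : Measurable fun s : E × ℝ => cutKernel (halfSpace s) (x, y) :=
    (measurable_uncurry_cutKernel (measurableSet_mem_halfSpace (E := E) measurable_id)).comp
      measurable_prodMk_right
  calc edist x y = c⁻¹ * (‖x - y‖ₑ * c) := by
        rw [mul_comm, mul_assoc, ENNReal.mul_inv_cancel lintegral_enorm_gaussianReal_ne_zero
          lintegral_enorm_gaussianReal_ne_top, mul_one, edist_eq_enorm_sub]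
    _ = c⁻¹ * ∫⁻ θ, ‖⟪θ, x - y⟫‖ₑ ∂(stdGaussian E) := by
        rw [lintegral_enorm_inner_stdGaussian]
    _ = c⁻¹ * ∫⁻ θ, ∫⁻ t : ℝ, cutKernel (halfSpace (θ, t)) (x, y) ∂volume ∂(stdGaussian E) := by
        congr 2
        funext θ
        rw [inner_sub_right, ← edist_eq_enorm_sub, ← lintegral_cutKernel_Ioi]
        rfl
    _ = ∫⁻ s, cutKernel (halfSpace s) (x, y) ∂(c⁻¹ • (stdGaussian E).prod volume) := by
        rw [lintegral_smul_measure, smul_eq_mul, lintegral_prod _ hk.aemeasurable]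

end Crofton

section Edist

/-- The kernel of distances between two realizations of a random element `U`. -/
noncomputable def edistKernel {Ω E : Type*} [PseudoEMetricSpace E] (U : Ω → E) (p : Ω × Ω) :
    ℝ≥0∞ :=
  edist (U p.1) (U p.2)

theorem edistKernel_triangle {Ω E : Type*} [PseudoEMetricSpace E] (U : Ω → E) (x y z : Ω) :
    edistKernel U (x, y) ≤ edistKernel U (x, z) + edistKernel U (y, z) :=
  edist_triangle_right _ _ _

theorem toReal_edistKernel {Ω E : Type*} [NormedAddCommGroup E] (U : Ω → E) (x y : Ω) :
    (edistKernel U (x, y)).toReal = ‖U x - U y‖ := by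
  rw [edistKernel, edist_eq_enorm_sub, toReal_enorm]

theorem lintegral_edistKernel_ne_top {Ω E : Type*} [MeasurableSpace Ω] [NormedAddCommGroup E]
    {μ : Measure Ω} [IsFiniteMeasure μ] {U : Ω → E} (hU : Integrable U μ) :
    ∫⁻ p, edistKernel U p ∂(μ.prod μ) ≠ ∞ := by
  simp only [edistKernel, edist_eq_enorm_sub]
  exact ((hU.comp_fst μ).sub (hU.comp_snd μ)).2.ne

theorem measurable_edistKernel {Ω E : Type*} [MeasurableSpace Ω] [PseudoEMetricSpace E]
    [SecondCountableTopology E] [MeasurableSpace E] [OpensMeasurableSpace E] {U : Ω → E}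
    (hU : Measurable U) : Measurable (edistKernel U) :=
  (hU.comp measurable_fst).edist (hU.comp measurable_snd)

variable {Ω E F : Type*} [MeasurableSpace Ω]
  [NormedAddCommGroup E] [MeasurableSpace E] [BorelSpace E]
  [NormedAddCommGroup F] [MeasurableSpace F] [BorelSpace F]

theorem hasNonnegDcov_edistKernel [InnerProductSpace ℝ E] [FiniteDimensional ℝ E]
    [InnerProductSpace ℝ F] [FiniteDimensional ℝ F] {μ : Measure Ω} [IsProbabilityMeasure μ]
    {U : Ω → E} {V : Ω → F} (hU : Measurable U) (hV : Measurable V) :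
    HasNonnegDcov μ (edistKernel U) (edistKernel V) := by
  obtain ⟨ν, _, hν⟩ := exists_edist_eq_lintegral_cutKernel_halfSpace E
  obtain ⟨τ, _, hτ⟩ := exists_edist_eq_lintegral_cutKernel_halfSpace F
  have hUν : edistKernel U = fun p => ∫⁻ s, cutKernel (U ⁻¹' halfSpace s) p ∂ν :=
    funext fun _ => hν _ _
  have hVτ : edistKernel V = fun p => ∫⁻ t, cutKernel (V ⁻¹' halfSpace t) p ∂τ :=
    funext fun _ => hτ _ _
  rw [hUν, hVτ]
  exact hasNonnegDcov_lintegral_cutKernel (measurableSet_mem_halfSpace hU)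
    (measurableSet_mem_halfSpace hV)

theorem dcov2_eq_toReal [SecondCountableTopology E] [SecondCountableTopology F] {μ : Measure Ω}
    [SFinite μ] {U : Ω → E} {V : Ω → F} (hU : Measurable U) (hV : Measurable V) :
    dcov2 μ U V = (∫⁻ p, edistKernel U p * edistKernel V p ∂(μ.prod μ)).toReal
      + ((∫⁻ p, edistKernel U p ∂(μ.prod μ)) * ∫⁻ p, edistKernel V p ∂(μ.prod μ)).toReal
      - 2 * (∫⁻ x, rowMean μ (edistKernel U) x * rowMean μ (edistKernel V) x ∂μ).toReal := by
  have hd := measurable_edistKernel hU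
  have he := measurable_edistKernel hV
  have hd_top (p : Ω × Ω) : edistKernel U p < ∞ := edist_lt_top _ _
  have he_top (p : Ω × Ω) : edistKernel V p < ∞ := edist_lt_top _ _
  have mul_top (p p' : Ω × Ω) : edistKernel U p * edistKernel V p' < ∞ :=
    ENNReal.mul_lt_top (hd_top p) (he_top p')
  have cross_swap : ∫⁻ ω, edistKernel U (ω.1, ω.2.2) * edistKernel V (ω.1, ω.2.1)
      ∂(μ.prod (μ.prod μ)) =
      ∫⁻ x, rowMean μ (edistKernel U) x * rowMean μ (edistKernel V) x ∂μ := by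
    simpa only [mul_comm] using lintegral_mul_prod_prod he hd
  simp only [dcov2, ← toReal_edistKernel, ← ENNReal.toReal_mul]
  rw [integral_toReal (by fun_prop) (.of_forall fun _ => mul_top _ _),
    integral_toReal (by fun_prop) (.of_forall fun _ => hd_top _),
    integral_toReal (by fun_prop) (.of_forall fun _ => he_top _),
    integral_toReal (by fun_prop) (.of_forall fun _ => mul_top _ _),
    integral_toReal (by fun_prop) (.of_forall fun _ => mul_top _ _),
    lintegral_mul_prod_prod hd he, cross_swap, ENNReal.toReal_mul]
  ring

end Edist

theorem dcov2_congr {Ω E F : Type*} [MeasurableSpace Ω] [NormedAddCommGroup E]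
    [NormedAddCommGroup F] {μ : Measure Ω} [SFinite μ] {U U' : Ω → E} {V V' : Ω → F}
    (hU : U =ᵐ[μ] U') (hV : V =ᵐ[μ] V') : dcov2 μ U V = dcov2 μ U' V' := by
  have pair {P : Ω → Prop} (h : ∀ᵐ ω ∂μ, P ω) : ∀ᵐ p ∂(μ.prod μ), P p.1 ∧ P p.2 :=
    (Measure.quasiMeasurePreserving_fst.ae h).and (Measure.quasiMeasurePreserving_snd.ae h)
  have triple {P : Ω → Prop} (h : ∀ᵐ ω ∂μ, P ω) :
      ∀ᵐ p ∂(μ.prod (μ.prod μ)), P p.1 ∧ P p.2.1 ∧ P p.2.2 :=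
    (Measure.quasiMeasurePreserving_fst.ae h).and (Measure.quasiMeasurePreserving_snd.ae (pair h))
  refine congrArg₂ (· - ·) (congrArg₂ (· - ·) (congrArg₂ (· + ·) ?_
    (congrArg₂ (· * ·) ?_ ?_)) ?_) ?_ <;> refine integral_congr_ae ?_
  · filter_upwards [pair hU, pair hV] with p hUp hVp
    rw [hUp.1, hUp.2, hVp.1, hVp.2]
  · filter_upwards [pair hU] with p hUp
    rw [hUp.1, hUp.2]
  · filter_upwards [pair hV] with p hVp
    rw [hVp.1, hVp.2]
  · filter_upwards [triple hU, triple hV] with p hUp hVp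
    rw [hUp.1, hUp.2.1, hVp.1, hVp.2.2]
  · filter_upwards [triple hU, triple hV] with p hUp hVp
    rw [hUp.1, hUp.2.2, hVp.1, hVp.2.1]

theorem toReal_add_toReal_sub_two_mul_toReal_nonneg {a b c : ℝ≥0∞} (hb : b ≠ ∞)
    (hac : 2 * c ≤ a + b) (hca : a ≤ 2 * (c + b)) : 0 ≤ a.toReal + b.toReal - 2 * c.toReal := by
  rcases eq_or_ne a ∞ with rfl | ha
  · have hc : c = ∞ := by
      by_contra hc
      exact hca.not_gt (ENNReal.mul_lt_top ENNReal.ofNat_lt_top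
        (ENNReal.add_lt_top.2 ⟨Ne.lt_top hc, hb.lt_top⟩))
    simp [hc]
  · have h := ENNReal.toReal_mono (ENNReal.add_ne_top.2 ⟨ha, hb⟩) hac
    rw [ENNReal.toReal_mul, ENNReal.toReal_add ha hb, ENNReal.toReal_ofNat] at h
    linarith

theorem dcov2_nonneg_general {Ω E F : Type*} [MeasurableSpace Ω]
    [NormedAddCommGroup E] [InnerProductSpace ℝ E] [FiniteDimensional ℝ E]
    [NormedAddCommGroup F] [InnerProductSpace ℝ F] [FiniteDimensional ℝ F]
    {μ : Measure Ω} [IsProbabilityMeasure μ] {U : Ω → E} {V : Ω → F}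
    (hU : Integrable U μ) (hV : Integrable V μ) : 0 ≤ dcov2 μ U V := by
  borelize E F
  wlog h : Measurable U ∧ Measurable V generalizing U V
  · have hU' := hU.aestronglyMeasurable
    have hV' := hV.aestronglyMeasurable
    rw [dcov2_congr hU'.ae_eq_mk hV'.ae_eq_mk]
    exact this (hU.congr hU'.ae_eq_mk) (hV.congr hV'.ae_eq_mk)
      ⟨hU'.stronglyMeasurable_mk.measurable, hV'.stronglyMeasurable_mk.measurable⟩
  have hd := measurable_edistKernel h.1
  have he := measurable_edistKernel h.2
  rw [dcov2_eq_toReal h.1 h.2]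
  exact toReal_add_toReal_sub_two_mul_toReal_nonneg
    (ENNReal.mul_ne_top (lintegral_edistKernel_ne_top hU) (lintegral_edistKernel_ne_top hV))
    (hasNonnegDcov_edistKernel h.1 h.2)
    (lintegral_mul_le_of_triangle hd he (edistKernel_triangle U) (edistKernel_triangle V))

/-- Nonnegativity of the squared distance covariance for random vectors with finite
first moments. -/
theorem dcov2_nonneg {Ω : Type*} [MeasurableSpace Ω] (μ : Measure Ω) [IsProbabilityMeasure μ]
    {p q : ℕ} (U : Ω → EuclideanSpace ℝ (Fin p)) (V : Ω → EuclideanSpace ℝ (Fin q))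
    (hU : Measurable U) (hV : Measurable V)
    (hUint : Integrable (fun ω => ‖U ω‖) μ) (hVint : Integrable (fun ω => ‖V ω‖) μ) :
    0 ≤ dcov2 μ U V :=
  dcov2_nonneg_general ((integrable_norm_iff hU.aestronglyMeasurable).1 hUint)
    ((integrable_norm_iff hV.aestronglyMeasurable).1 hVint)
end

section
/- For random vectors U ∈ ℝ^p and V ∈ ℝ^q with finite first moments, the distance covariance V(U,V) = 0 if and only if U and V are independent. -/
open MeasureTheory ProbabilityTheory

/-!
Let `P` be the law of `(U, V)` and `Q` the product of the laws of `U` and `V`. In moment form,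
`dcov2` is the energy `∬ ‖x - x'‖ ‖y - y'‖ d(P - Q)(x, y) d(P - Q)(x', y')`. The norm of a
`d`-dimensional space has the spectral representation
`‖x‖ = c ∫ (1 - cos ⟪x, s⟫) / ‖s‖ ^ (d + 1) ds`: the integral is invariant under rotations and, by
scaling, homogeneous of degree one. Inserting it for both norms and using that `P` and `Q` have the
same marginals, the energy becomes the integral of `|φ_P - φ_Q|²` against a measure of full
support. So it vanishes exactly when the characteristic functions agree, that is, when `P = Q`.

This computation is valid when `E[(1 + ‖U‖) (1 + ‖V‖)] < ∞`. When that moment is infinite, `U` and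
`V` are dependent, and all integrals in `dcov2` except those of the product term diverge and take
the junk value `0`, while the product term is positive.
-/

section NormRepresentation

open Module
open scoped RealInnerProductSpace NNReal

variable {E : Type*} [NormedAddCommGroup E] [InnerProductSpace ℝ E]

lemma one_sub_cos_inner_nonneg (x s : E) : 0 ≤ 1 - Real.cos ⟪x, s⟫ :=
  sub_nonneg.2 (Real.cos_le_one _)

lemma one_sub_cos_inner_le (x s : E) :
    1 - Real.cos ⟪x, s⟫ ≤ (2 + ‖x‖ ^ 2) * min 1 (‖s‖ ^ 2) := by
  have hinner : ⟪x, s⟫ ^ 2 ≤ ‖x‖ ^ 2 * ‖s‖ ^ 2 := by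
    rw [← mul_pow, ← sq_abs]
    gcongr
    exact abs_real_inner_le_norm x s
  have hle_two : 1 - Real.cos ⟪x, s⟫ ≤ 2 := by linarith [Real.neg_one_le_cos ⟪x, s⟫]
  have hle_sq : 1 - Real.cos ⟪x, s⟫ ≤ ‖x‖ ^ 2 * ‖s‖ ^ 2 := by
    linarith [Real.one_sub_sq_div_two_le_cos (x := ⟪x, s⟫), sq_nonneg ⟪x, s⟫]
  rw [mul_min_of_nonneg _ _ (by positivity), le_min_iff]
  constructor
  · linarith [sq_nonneg ‖x‖]
  · linarith [sq_nonneg ‖s‖]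

lemma integrableOn_Ioi_min_one_inv_sq :
    IntegrableOn (fun r : ℝ => min 1 (r ^ 2)⁻¹) (Set.Ioi 0) := by
  have hmeas : Measurable fun r : ℝ => min 1 (r ^ 2)⁻¹ := by fun_prop
  have hnorm (r : ℝ) : ‖min 1 (r ^ 2)⁻¹‖ = min 1 (r ^ 2)⁻¹ :=
    Real.norm_of_nonneg (by positivity)
  rw [← Set.Ioc_union_Ioi_eq_Ioi (zero_le_one' ℝ)]
  refine IntegrableOn.union ?near_zero ?near_infinity
  case near_zero =>
    refine Integrable.mono' (g := fun _ => (1 : ℝ)) (by simp) hmeas.aestronglyMeasurable ?_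
    exact .of_forall fun r => (hnorm r).trans_le (min_le_left _ _)
  case near_infinity =>
    refine Integrable.mono' (integrableOn_Ioi_rpow_of_lt (a := -2) (by norm_num) one_pos)
      hmeas.aestronglyMeasurable ?_
    filter_upwards [ae_restrict_mem measurableSet_Ioi] with r hr
    have hr : 0 < r := one_pos.trans hr
    rw [hnorm, Real.rpow_neg hr.le, Real.rpow_two]
    exact min_le_right _ _

variable [FiniteDimensional ℝ E] [MeasurableSpace E] [BorelSpace E]

lemma integrable_inv_norm_pow_mul_min_one_sq [Nontrivial E] (μ : Measure E)
    [μ.IsAddHaarMeasure] :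
    Integrable (fun s : E => (‖s‖ ^ (finrank ℝ E + 1))⁻¹ * min 1 (‖s‖ ^ 2)) μ := by
  rw [integrable_fun_norm_addHaar μ
    (f := fun r : ℝ => (r ^ (finrank ℝ E + 1))⁻¹ * min 1 (r ^ 2))]
  refine integrableOn_Ioi_min_one_inv_sq.congr_fun (fun r hr => ?_) measurableSet_Ioi
  have hr : 0 < r := hr
  obtain ⟨k, hk⟩ := Nat.exists_eq_succ_of_ne_zero (finrank_pos (R := ℝ) (M := E)).ne'
  have hpow : r ^ k * (r ^ (k + 1 + 1))⁻¹ = (r ^ 2)⁻¹ := by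
    field_simp
    ring
  simp only [hk, Nat.succ_eq_add_one, Nat.add_sub_cancel, smul_eq_mul]
  rw [← mul_assoc, hpow, mul_min_of_nonneg _ _ (by positivity), mul_one,
    inv_mul_cancel₀ (by positivity), min_comm]

/-- The measure `‖s‖ ^ (-(d + 1)) ds` on a `d`-dimensional space: the Székely–Rizzo weight without
its normalizing constant. The density vanishes at `0`, where the inverse takes its junk value. -/
noncomputable def szekelyRizzoMeasure (E : Type*) [NormedAddCommGroup E] [InnerProductSpace ℝ E]
    [FiniteDimensional ℝ E] [MeasurableSpace E] [BorelSpace E] : Measure E :=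
  volume.withDensity fun s => ((‖s‖₊ ^ (finrank ℝ E + 1))⁻¹ : ℝ≥0)

instance szekelyRizzoMeasure.instSFinite : SFinite (szekelyRizzoMeasure E) := by
  unfold szekelyRizzoMeasure
  infer_instance

instance szekelyRizzoMeasure.instIsOpenPosMeasure [Nontrivial E] :
    (szekelyRizzoMeasure E).IsOpenPosMeasure := by
  refine Measure.AbsolutelyContinuous.isOpenPosMeasure (μ := volume)
    (withDensity_absolutelyContinuous' (by fun_prop) ?_)
  filter_upwards [Measure.ae_ne volume (0 : E)] with s hs
  simp [hs]

instance szekelyRizzoMeasure.instIsNegInvariant : (szekelyRizzoMeasure E).IsNegInvariant where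
  neg_eq_self := by
    ext A hA
    rw [Measure.neg_apply, szekelyRizzoMeasure, withDensity_apply _ hA,
      withDensity_apply _ hA.neg,
      ← (Measure.measurePreserving_neg volume).setLIntegral_comp_preimage hA (by fun_prop)]
    simp only [nnnorm_neg, Set.neg_preimage]

lemma integrable_szekelyRizzoMeasure_iff {f : E → ℝ} :
    Integrable f (szekelyRizzoMeasure E) ↔
      Integrable fun s => (‖s‖ ^ (finrank ℝ E + 1))⁻¹ * f s := by
  rw [szekelyRizzoMeasure, integrable_withDensity_iff_integrable_coe_smul (by fun_prop)]
  simp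

lemma integral_szekelyRizzoMeasure (f : E → ℝ) :
    ∫ s, f s ∂szekelyRizzoMeasure E = ∫ s, (‖s‖ ^ (finrank ℝ E + 1))⁻¹ * f s := by
  rw [szekelyRizzoMeasure, integral_withDensity_eq_integral_smul (by fun_prop)]
  simp [NNReal.smul_def]

lemma integrable_one_sub_cos_inner_szekelyRizzoMeasure [Nontrivial E] (x : E) :
    Integrable (fun s => 1 - Real.cos ⟪x, s⟫) (szekelyRizzoMeasure E) := by
  rw [integrable_szekelyRizzoMeasure_iff]
  refine ((integrable_inv_norm_pow_mul_min_one_sq volume).const_mul (2 + ‖x‖ ^ 2)).mono'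
    (by fun_prop) (.of_forall fun s => ?_)
  have hnonneg := one_sub_cos_inner_nonneg x s
  rw [Real.norm_of_nonneg (by positivity), mul_left_comm]
  gcongr
  exact one_sub_cos_inner_le x s

/-- The function `x ↦ ∫ (1 - cos ⟪x, s⟫) / ‖s‖ ^ (d + 1) ds` on a `d`-dimensional space, which is
a positive multiple of the norm. -/
noncomputable def cosTransform (x : E) : ℝ :=
  ∫ s, (1 - Real.cos ⟪x, s⟫) ∂szekelyRizzoMeasure E

lemma cosTransform_pos {x : E} (hx : x ≠ 0) : 0 < cosTransform x := by
  have : Nontrivial E := ⟨x, 0, hx⟩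
  refine integral_pos_of_integrable_nonneg_nonzero (x := (Real.pi / ‖x‖ ^ 2) • x) (by fun_prop)
    (integrable_one_sub_cos_inner_szekelyRizzoMeasure x) (one_sub_cos_inner_nonneg x) ?_
  have hx' : ‖x‖ ≠ 0 := norm_ne_zero_iff.2 hx
  norm_num [real_inner_smul_right, hx']

lemma cosTransform_linearIsometryEquiv (R : E ≃ₗᵢ[ℝ] E) (x : E) :
    cosTransform (R x) = cosTransform x := by
  simp only [cosTransform, integral_szekelyRizzoMeasure]
  rw [← R.measurePreserving.integral_comp' (f := R.toMeasurableEquiv)]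
  simp

lemma cosTransform_eq_of_norm_eq {x y : E} (h : ‖x‖ = ‖y‖) :
    cosTransform x = cosTransform y := by
  rw [← Submodule.reflection_sub h, cosTransform_linearIsometryEquiv]

lemma cosTransform_smul {r : ℝ} (hr : 0 < r) (x : E) :
    cosTransform (r • x) = r * cosTransform x := by
  simp only [cosTransform, integral_szekelyRizzoMeasure, real_inner_smul_left]
  have hscale := Measure.integral_comp_smul volume
    (fun s : E => (‖s‖ ^ (finrank ℝ E + 1))⁻¹ * (1 - Real.cos ⟪x, s⟫)) r
  simp only [norm_smul, Real.norm_of_nonneg hr.le, mul_pow, mul_inv, mul_assoc,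
    integral_const_mul, real_inner_smul_right, abs_of_pos (inv_pos.2 (pow_pos hr _)),
    smul_eq_mul] at hscale
  rw [inv_mul_eq_iff_eq_mul₀ (by positivity)] at hscale
  rw [hscale, pow_succ']
  field_simp

lemma exists_cosTransform_eq_mul_norm [Nontrivial E] :
    ∃ c : ℝ, 0 < c ∧ ∀ x : E, cosTransform x = c * ‖x‖ := by
  obtain ⟨e, he⟩ := exists_norm_eq E zero_le_one
  refine ⟨cosTransform e, cosTransform_pos (norm_ne_zero_iff.1 (by simp [he])), fun x => ?_⟩
  rcases eq_or_ne x 0 with rfl | hx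
  · simp [cosTransform]
  · rw [cosTransform_eq_of_norm_eq (y := ‖x‖ • e) (by simp [norm_smul, he]),
      cosTransform_smul (norm_pos_iff.2 hx), mul_comm]

/-- `m` is a spectral measure of the norm: `‖x‖ = ∫ (1 - cos ⟪x, s⟫) dm(s)` for every `x`, with an
absolutely convergent integral. -/
structure RepresentsNorm {E : Type*} [NormedAddCommGroup E] [InnerProductSpace ℝ E]
    [MeasurableSpace E] (m : Measure E) : Prop where
  integrable (x : E) : Integrable (fun s => 1 - Real.cos ⟪x, s⟫) m
  integral_eq (x : E) : ∫ s, (1 - Real.cos ⟪x, s⟫) ∂m = ‖x‖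

theorem exists_representsNorm (E : Type*) [NormedAddCommGroup E] [InnerProductSpace ℝ E]
    [FiniteDimensional ℝ E] [MeasurableSpace E] [BorelSpace E] :
    ∃ m : Measure E, SFinite m ∧ m.IsOpenPosMeasure ∧ m.IsNegInvariant ∧ RepresentsNorm m := by
  rcases subsingleton_or_nontrivial E with _ | _
  · refine ⟨volume, inferInstance, inferInstance, inferInstance, fun x => ?_, fun x => ?_⟩ <;>
      simp [Subsingleton.elim x 0]
  obtain ⟨c, hc, hnorm⟩ := exists_cosTransform_eq_mul_norm (E := E)
  refine ⟨ENNReal.ofReal c⁻¹ • szekelyRizzoMeasure E, inferInstance,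
    Measure.isOpenPosMeasure_smul _ (by simpa using hc), ⟨?_⟩, fun x => ?_, fun x => ?_⟩
  · rw [Measure.neg, Measure.map_smul, ← Measure.neg, Measure.neg_eq_self]
  · exact (integrable_one_sub_cos_inner_szekelyRizzoMeasure x).smul_measure ENNReal.ofReal_ne_top
  · rw [integral_smul_measure, ← cosTransform, hnorm, ENNReal.toReal_ofReal (by positivity),
      smul_eq_mul, inv_mul_cancel_left₀ hc.ne']

end NormRepresentation

section JointCharFun

open scoped RealInnerProductSpace ComplexConjugate

variable {E F : Type*} [NormedAddCommGroup E] [InnerProductSpace ℝ E] [MeasurableSpace E]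
  [NormedAddCommGroup F] [InnerProductSpace ℝ F] [MeasurableSpace F]

/-- The characteristic function of a measure on `E × F`, as a function of a pair of frequencies.
Mathlib's `charFun` needs an inner product, which `E × F` carries only as `WithLp 2 (E × F)`. -/
noncomputable def jointCharFun (ρ : Measure (E × F)) (z : E × F) : ℂ :=
  charFun (ρ.map (WithLp.toLp 2)) (WithLp.toLp 2 z)

lemma jointCharFun_apply (ρ : Measure (E × F)) (z : E × F) :
    jointCharFun ρ z =
      ∫ w, Complex.exp (((⟪w.1, z.1⟫ + ⟪w.2, z.2⟫ : ℝ) : ℂ) * Complex.I) ∂ρ := by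
  rw [jointCharFun, charFun_apply, ← MeasurableEquiv.coe_toLp, integral_map_equiv]
  rfl

lemma jointCharFun_fst [OpensMeasurableSpace E] (ρ : Measure (E × F)) (s : E) :
    jointCharFun ρ (s, 0) = charFun ρ.fst s := by
  rw [jointCharFun_apply, charFun_apply, Measure.fst, integral_map (by fun_prop) (by fun_prop)]
  simp

lemma jointCharFun_snd [OpensMeasurableSpace F] (ρ : Measure (E × F)) (t : F) :
    jointCharFun ρ (0, t) = charFun ρ.snd t := by
  rw [jointCharFun_apply, charFun_apply, Measure.snd, integral_map (by fun_prop) (by fun_prop)]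
  simp

variable [BorelSpace E] [SecondCountableTopology E] [BorelSpace F] [SecondCountableTopology F]

lemma continuous_jointCharFun (ρ : Measure (E × F)) [IsFiniteMeasure ρ] :
    Continuous (jointCharFun ρ) :=
  continuous_charFun.comp (WithLp.prod_continuous_toLp 2 E F)

lemma continuous_sq_norm_jointCharFun_sub (ρ σ : Measure (E × F)) [IsFiniteMeasure ρ]
    [IsFiniteMeasure σ] : Continuous fun z => ‖jointCharFun ρ z - jointCharFun σ z‖ ^ 2 :=
  ((continuous_jointCharFun ρ).sub (continuous_jointCharFun σ)).norm.pow 2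

lemma jointCharFun_injective [CompleteSpace E] [CompleteSpace F] {ρ σ : Measure (E × F)}
    [IsFiniteMeasure ρ] [IsFiniteMeasure σ] (h : jointCharFun ρ = jointCharFun σ) : ρ = σ :=
  (MeasurableEquiv.toLp 2 (E × F)).map_measurableEquiv_injective <|
    Measure.ext_of_charFun <| funext fun t => congrFun h t.ofLp

lemma integral_cos_inner_sub_prod (ρ σ : Measure (E × F)) [IsFiniteMeasure ρ] [IsFiniteMeasure σ]
    (z : E × F) :
    ∫ w, Real.cos (⟪w.1.1 - w.2.1, z.1⟫ + ⟪w.1.2 - w.2.2, z.2⟫) ∂(ρ.prod σ) =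
      (jointCharFun ρ z * conj (jointCharFun σ z)).re := by
  let e (w : E × F) : ℂ := Complex.exp (((⟪w.1, z.1⟫ + ⟪w.2, z.2⟫ : ℝ) : ℂ) * Complex.I)
  have he_int (τ : Measure (E × F)) [IsFiniteMeasure τ] : Integrable e τ :=
    .of_bound (by fun_prop) 1 (.of_forall fun w => (Complex.norm_exp_ofReal_mul_I _).le)
  have hcos (w : (E × F) × E × F) :
      Real.cos (⟪w.1.1 - w.2.1, z.1⟫ + ⟪w.1.2 - w.2.2, z.2⟫) = (e w.1 * conj (e w.2)).re := by
    rw [← Complex.exp_ofReal_mul_I_re, ← Complex.exp_conj, ← Complex.exp_add]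
    simp only [inner_sub_left, map_mul, Complex.conj_ofReal, Complex.conj_I]
    push_cast
    ring_nf
  have hconj_int : Integrable (fun w => conj (e w)) σ :=
    Complex.conjCLE.integrable_comp_iff.2 (he_int σ)
  simp only [hcos]
  rw [jointCharFun_apply, jointCharFun_apply, ← integral_conj, ← integral_prod_mul]
  exact integral_re ((he_int ρ).mul_prod hconj_int)

end JointCharFun

section Energy

open scoped RealInnerProductSpace ComplexConjugate

variable {E F : Type*} [NormedAddCommGroup E] [NormedAddCommGroup F]

lemma norm_sub_le_one_add_norm_mul_one_add_norm (x x' : E) :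
    ‖x - x'‖ ≤ (1 + ‖x‖) * (1 + ‖x'‖) := by
  nlinarith [norm_sub_le x x', mul_nonneg (norm_nonneg x) (norm_nonneg x')]

lemma norm_sub_mul_norm_sub_le (x x' : E) (y y' : F) :
    ‖x - x'‖ * ‖y - y'‖ ≤ (1 + ‖x‖) * (1 + ‖y‖) * ((1 + ‖x'‖) * (1 + ‖y'‖)) := by
  calc ‖x - x'‖ * ‖y - y'‖ ≤ (1 + ‖x‖) * (1 + ‖x'‖) * ((1 + ‖y‖) * (1 + ‖y'‖)) := by
        gcongr <;> exact norm_sub_le_one_add_norm_mul_one_add_norm _ _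
    _ = _ := by ring

variable [MeasurableSpace E] [MeasurableSpace F]

/-- The mutual energy `∬ ‖x - x'‖ ‖y - y'‖ dρ(x, y) dσ(x', y')` of two measures. -/
noncomputable def mutualEnergy (ρ σ : Measure (E × F)) : ℝ :=
  ∫ w, ‖w.1.1 - w.2.1‖ * ‖w.1.2 - w.2.2‖ ∂(ρ.prod σ)

lemma mutualEnergy_map_map [BorelSpace E] [SecondCountableTopology E] [BorelSpace F]
    [SecondCountableTopology F] {Ω Ω' : Type*} [MeasurableSpace Ω] [MeasurableSpace Ω']
    {μ : Measure Ω} {μ' : Measure Ω'} [SFinite μ] [SFinite μ'] {f : Ω → E × F} {g : Ω' → E × F}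
    (hf : Measurable f) (hg : Measurable g) :
    mutualEnergy (μ.map f) (μ'.map g) =
      ∫ ω, ‖(f ω.1).1 - (g ω.2).1‖ * ‖(f ω.1).2 - (g ω.2).2‖ ∂(μ.prod μ') := by
  rw [mutualEnergy, Measure.map_prod_map _ _ hf hg, integral_map (by fun_prop) (by fun_prop)]
  rfl

lemma integrable_norm_sub_mul_norm_sub [BorelSpace E] [SecondCountableTopology E] [BorelSpace F]
    [SecondCountableTopology F] {ρ σ : Measure (E × F)}
    (hρ : Integrable (fun z => (1 + ‖z.1‖) * (1 + ‖z.2‖)) ρ)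
    (hσ : Integrable (fun z => (1 + ‖z.1‖) * (1 + ‖z.2‖)) σ) :
    Integrable (fun w => ‖w.1.1 - w.2.1‖ * ‖w.1.2 - w.2.2‖) (ρ.prod σ) := by
  refine (hρ.mul_prod hσ).mono' (by fun_prop) (.of_forall fun w => ?_)
  rw [Real.norm_of_nonneg (by positivity)]
  exact norm_sub_mul_norm_sub_le _ _ _ _

/-- The energy of the signed measure `ρ - σ`. Distance covariance is the energy discrepancy between
the law of `(U, V)` and the product of the laws of `U` and `V`. -/
noncomputable def energyDiscrepancy (ρ σ : Measure (E × F)) : ℝ :=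
  mutualEnergy ρ ρ + mutualEnergy σ σ - 2 * mutualEnergy ρ σ

variable [InnerProductSpace ℝ E] [InnerProductSpace ℝ F]

/-- The mutual energy of `ρ` and `σ` with each norm `‖x‖` replaced by the term `1 - cos ⟪x, s⟫` of
its spectral representation. -/
noncomputable def cosEnergy (ρ σ : Measure (E × F)) (z : E × F) : ℝ :=
  ∫ w, (1 - Real.cos ⟪w.1.1 - w.2.1, z.1⟫) * (1 - Real.cos ⟪w.1.2 - w.2.2, z.2⟫) ∂(ρ.prod σ)

/-- The energy discrepancy of `ρ` and `σ` with `cosEnergy` in place of the mutual energy. -/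
noncomputable def cosEnergyDiscrepancy (ρ σ : Measure (E × F)) (z : E × F) : ℝ :=
  cosEnergy ρ ρ z + cosEnergy σ σ z - 2 * cosEnergy ρ σ z

lemma integrable_one_sub_cos_inner_mul_prod {m : Measure E} {n : Measure F} [SFinite m] [SFinite n]
    (hm : RepresentsNorm m) (hn : RepresentsNorm n) (x : E) (y : F) :
    Integrable (fun z => (1 - Real.cos ⟪x, z.1⟫) * (1 - Real.cos ⟪y, z.2⟫)) (m.prod n) :=
  (hm.integrable x).mul_prod (hn.integrable y)

lemma integral_one_sub_cos_inner_mul_prod {m : Measure E} {n : Measure F} [SFinite m] [SFinite n]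
    (hm : RepresentsNorm m) (hn : RepresentsNorm n) (x : E) (y : F) :
    ∫ z, (1 - Real.cos ⟪x, z.1⟫) * (1 - Real.cos ⟪y, z.2⟫) ∂(m.prod n) = ‖x‖ * ‖y‖ := by
  rw [← hm.integral_eq, ← hn.integral_eq, ← integral_prod_mul]

variable [BorelSpace E] [SecondCountableTopology E] [BorelSpace F] [SecondCountableTopology F]

lemma cosEnergy_eq_re_jointCharFun (ρ σ : Measure (E × F)) [IsProbabilityMeasure ρ]
    [IsProbabilityMeasure σ] (s : E) (t : F) :
    cosEnergy ρ σ (s, t) =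
      1 - (charFun ρ.fst s * conj (charFun σ.fst s)).re
        - (charFun ρ.snd t * conj (charFun σ.snd t)).re
        + ((jointCharFun ρ (s, t) * conj (jointCharFun σ (s, t))).re
          + (jointCharFun ρ (s, -t) * conj (jointCharFun σ (s, -t))).re) / 2 := by
  let c (z : E × F) (w : (E × F) × E × F) : ℝ :=
    Real.cos (⟪w.1.1 - w.2.1, z.1⟫ + ⟪w.1.2 - w.2.2, z.2⟫)
  have hc_int (z : E × F) : Integrable (c z) (ρ.prod σ) :=
    .of_bound (by fun_prop) 1 (.of_forall fun w => Real.abs_cos_le_one _)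
  have hc_integral (z : E × F) : ∫ w, c z w ∂(ρ.prod σ) =
      (jointCharFun ρ z * conj (jointCharFun σ z)).re := integral_cos_inner_sub_prod ρ σ z
  have hexpand (w : (E × F) × E × F) :
      (1 - Real.cos ⟪w.1.1 - w.2.1, s⟫) * (1 - Real.cos ⟪w.1.2 - w.2.2, t⟫) =
        1 - c (s, 0) w - c (0, t) w + (c (s, t) w + c (s, -t) w) / 2 := by
    simp only [c, inner_zero_right, inner_neg_right, Real.cos_add, Real.cos_zero, Real.sin_zero,
      Real.cos_neg, Real.sin_neg]
    ring
  have hmarginals_int : Integrable (fun w => 1 - c (s, 0) w - c (0, t) w) (ρ.prod σ) :=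
    ((integrable_const 1).sub (hc_int _)).sub (hc_int _)
  have hjoint_int : Integrable (fun w => (c (s, t) w + c (s, -t) w) / 2) (ρ.prod σ) :=
    ((hc_int _).add (hc_int _)).div_const 2
  have hone_sub_int : Integrable (fun w => 1 - c (s, 0) w) (ρ.prod σ) :=
    (integrable_const 1).sub (hc_int _)
  rw [cosEnergy]
  simp only [hexpand]
  rw [integral_add hmarginals_int hjoint_int, integral_sub hone_sub_int (hc_int _),
    integral_sub (integrable_const 1) (hc_int _), integral_div,
    integral_add (hc_int _) (hc_int _)]
  simp only [hc_integral, jointCharFun_fst, jointCharFun_snd, integral_const, probReal_univ,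
    one_smul]

lemma cosEnergyDiscrepancy_eq {ρ σ : Measure (E × F)} [IsProbabilityMeasure ρ]
    [IsProbabilityMeasure σ] (hfst : ρ.fst = σ.fst) (hsnd : ρ.snd = σ.snd) (s : E) (t : F) :
    cosEnergyDiscrepancy ρ σ (s, t) =
      (‖jointCharFun ρ (s, t) - jointCharFun σ (s, t)‖ ^ 2
        + ‖jointCharFun ρ (s, -t) - jointCharFun σ (s, -t)‖ ^ 2) / 2 := by
  simp only [cosEnergyDiscrepancy, cosEnergy_eq_re_jointCharFun, hfst, hsnd, Complex.sq_norm,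
    Complex.normSq_sub, Complex.mul_conj, Complex.ofReal_re]
  ring

variable {ρ σ : Measure (E × F)} {m : Measure E} {n : Measure F} [SFinite m] [SFinite n]

lemma integrable_uncurry_one_sub_cos_inner_mul (hm : RepresentsNorm m) (hn : RepresentsNorm n)
    (h : Integrable (fun w => ‖w.1.1 - w.2.1‖ * ‖w.1.2 - w.2.2‖) (ρ.prod σ)) :
    Integrable (Function.uncurry fun (w : (E × F) × E × F) (z : E × F) =>
        (1 - Real.cos ⟪w.1.1 - w.2.1, z.1⟫) * (1 - Real.cos ⟪w.1.2 - w.2.2, z.2⟫))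
      ((ρ.prod σ).prod (m.prod n)) := by
  simp only [Function.uncurry_def]
  rw [integrable_prod_iff (by fun_prop)]
  refine ⟨.of_forall fun w => integrable_one_sub_cos_inner_mul_prod hm hn
    (w.1.1 - w.2.1) (w.1.2 - w.2.2), ?_⟩
  simpa only [norm_mul, Real.norm_of_nonneg (one_sub_cos_inner_nonneg _ _),
    integral_one_sub_cos_inner_mul_prod hm hn] using h

section SFinite

variable [SFinite ρ] [SFinite σ]

lemma integrable_cosEnergy (hm : RepresentsNorm m) (hn : RepresentsNorm n)
    (h : Integrable (fun w => ‖w.1.1 - w.2.1‖ * ‖w.1.2 - w.2.2‖) (ρ.prod σ)) :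
    Integrable (cosEnergy ρ σ) (m.prod n) :=
  (integrable_uncurry_one_sub_cos_inner_mul hm hn h).integral_prod_right

lemma integral_cosEnergy (hm : RepresentsNorm m) (hn : RepresentsNorm n)
    (h : Integrable (fun w => ‖w.1.1 - w.2.1‖ * ‖w.1.2 - w.2.2‖) (ρ.prod σ)) :
    ∫ z, cosEnergy ρ σ z ∂(m.prod n) = mutualEnergy ρ σ := by
  simp only [cosEnergy, mutualEnergy]
  rw [← integral_integral_swap (integrable_uncurry_one_sub_cos_inner_mul hm hn h)]
  simp only [integral_one_sub_cos_inner_mul_prod hm hn]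

lemma integrable_cosEnergyDiscrepancy (hm : RepresentsNorm m) (hn : RepresentsNorm n)
    (hρ : Integrable (fun z => (1 + ‖z.1‖) * (1 + ‖z.2‖)) ρ)
    (hσ : Integrable (fun z => (1 + ‖z.1‖) * (1 + ‖z.2‖)) σ) :
    Integrable (cosEnergyDiscrepancy ρ σ) (m.prod n) :=
  ((integrable_cosEnergy hm hn (integrable_norm_sub_mul_norm_sub hρ hρ)).add
    (integrable_cosEnergy hm hn (integrable_norm_sub_mul_norm_sub hσ hσ))).sub
    ((integrable_cosEnergy hm hn (integrable_norm_sub_mul_norm_sub hρ hσ)).const_mul 2)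

lemma integral_cosEnergyDiscrepancy (hm : RepresentsNorm m) (hn : RepresentsNorm n)
    (hρ : Integrable (fun z => (1 + ‖z.1‖) * (1 + ‖z.2‖)) ρ)
    (hσ : Integrable (fun z => (1 + ‖z.1‖) * (1 + ‖z.2‖)) σ) :
    ∫ z, cosEnergyDiscrepancy ρ σ z ∂(m.prod n) = energyDiscrepancy ρ σ := by
  have hρρ := integrable_norm_sub_mul_norm_sub hρ hρ
  have hσσ := integrable_norm_sub_mul_norm_sub hσ hσ
  have hρσ := integrable_norm_sub_mul_norm_sub hρ hσ
  have hself_int : Integrable (fun z => cosEnergy ρ ρ z + cosEnergy σ σ z) (m.prod n) :=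
    (integrable_cosEnergy hm hn hρρ).add (integrable_cosEnergy hm hn hσσ)
  simp only [cosEnergyDiscrepancy, energyDiscrepancy]
  rw [integral_sub hself_int ((integrable_cosEnergy hm hn hρσ).const_mul 2),
    integral_add (integrable_cosEnergy hm hn hρρ) (integrable_cosEnergy hm hn hσσ),
    integral_const_mul, integral_cosEnergy hm hn hρρ, integral_cosEnergy hm hn hσσ,
    integral_cosEnergy hm hn hρσ]

end SFinite

variable [IsProbabilityMeasure ρ] [IsProbabilityMeasure σ]

lemma integrable_sq_norm_jointCharFun_sub (hm : RepresentsNorm m) (hn : RepresentsNorm n)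
    (hρ : Integrable (fun z => (1 + ‖z.1‖) * (1 + ‖z.2‖)) ρ)
    (hσ : Integrable (fun z => (1 + ‖z.1‖) * (1 + ‖z.2‖)) σ)
    (hfst : ρ.fst = σ.fst) (hsnd : ρ.snd = σ.snd) :
    Integrable (fun z => ‖jointCharFun ρ z - jointCharFun σ z‖ ^ 2) (m.prod n) := by
  refine ((integrable_cosEnergyDiscrepancy hm hn hρ hσ).const_mul 2).mono'
    (continuous_sq_norm_jointCharFun_sub ρ σ).aestronglyMeasurable (.of_forall fun ⟨s, t⟩ => ?_)
  rw [Real.norm_of_nonneg (by positivity), cosEnergyDiscrepancy_eq hfst hsnd]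
  linarith [sq_nonneg ‖jointCharFun ρ (s, -t) - jointCharFun σ (s, -t)‖]

theorem energyDiscrepancy_eq_integral [n.IsNegInvariant] (hm : RepresentsNorm m)
    (hn : RepresentsNorm n) (hρ : Integrable (fun z => (1 + ‖z.1‖) * (1 + ‖z.2‖)) ρ)
    (hσ : Integrable (fun z => (1 + ‖z.1‖) * (1 + ‖z.2‖)) σ)
    (hfst : ρ.fst = σ.fst) (hsnd : ρ.snd = σ.snd) :
    energyDiscrepancy ρ σ =
      ∫ z, ‖jointCharFun ρ z - jointCharFun σ z‖ ^ 2 ∂(m.prod n) := by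
  let d (z : E × F) : ℝ := ‖jointCharFun ρ z - jointCharFun σ z‖ ^ 2
  let negSnd : E × F ≃ᵐ E × F := (MeasurableEquiv.refl E).prodCongr (MeasurableEquiv.neg F)
  have hnegSnd : MeasurePreserving negSnd (m.prod n) (m.prod n) :=
    (MeasurePreserving.id m).prod (Measure.measurePreserving_neg n)
  have hd_int : Integrable d (m.prod n) :=
    integrable_sq_norm_jointCharFun_sub hm hn hρ hσ hfst hsnd
  have hd_negSnd_int : Integrable (fun z => d (negSnd z)) (m.prod n) :=
    hnegSnd.integrable_comp_of_integrable hd_int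
  calc energyDiscrepancy ρ σ
      = ∫ z, cosEnergyDiscrepancy ρ σ z ∂(m.prod n) :=
        (integral_cosEnergyDiscrepancy hm hn hρ hσ).symm
    _ = ∫ z, (d z + d (negSnd z)) / 2 ∂(m.prod n) :=
        integral_congr_ae (.of_forall fun z => cosEnergyDiscrepancy_eq hfst hsnd z.1 z.2)
    _ = ∫ z, d z ∂(m.prod n) := by
        rw [integral_div, integral_add hd_int hd_negSnd_int, hnegSnd.integral_comp',
          add_self_div_two]

end Energy

section ProductOfMarginals

variable {E F : Type*} [NormedAddCommGroup E] [MeasurableSpace E] [NormedAddCommGroup F]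
  [MeasurableSpace F]

lemma integrable_id_map [OpensMeasurableSpace E] [SecondCountableTopology E] {Ω : Type*}
    [MeasurableSpace Ω] {μ : Measure Ω} {U : Ω → E} (hU : Measurable U) (hUint : Integrable U μ) :
    Integrable id (μ.map U) :=
  (integrable_map_measure (by fun_prop) hU.aemeasurable).2 hUint

lemma integrable_one_add_norm_mul_prod {ρ : Measure E} {σ : Measure F} [IsFiniteMeasure ρ]
    [IsFiniteMeasure σ] (hρ : Integrable id ρ) (hσ : Integrable id σ) :
    Integrable (fun z => (1 + ‖z.1‖) * (1 + ‖z.2‖)) (ρ.prod σ) :=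
  ((integrable_const 1).add hρ.norm).mul_prod ((integrable_const 1).add hσ.norm)

lemma integrable_norm_sub_prod {ρ ρ' : Measure E} [IsFiniteMeasure ρ] [IsFiniteMeasure ρ']
    (hρ : Integrable id ρ) (hρ' : Integrable id ρ') :
    Integrable (fun x => ‖x.1 - x.2‖) (ρ.prod ρ') :=
  ((hρ.comp_fst ρ').sub (hρ'.comp_snd ρ)).norm

lemma exists_ae_eq_of_integral_norm_sub_eq_zero {ρ : Measure E} [IsProbabilityMeasure ρ]
    (hρ : Integrable id ρ) (h : ∫ x, ‖x.1 - x.2‖ ∂(ρ.prod ρ) = 0) :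
    ∃ x₀, ∀ᵐ x ∂ρ, x = x₀ := by
  rw [integral_eq_zero_iff_of_nonneg (fun _ => norm_nonneg _)
    (integrable_norm_sub_prod hρ hρ)] at h
  obtain ⟨x₀, hx₀⟩ := (Measure.ae_ae_of_ae_prod h).exists
  refine ⟨x₀, hx₀.mono fun x hx => ?_⟩
  exact (sub_eq_zero.1 (norm_eq_zero.1 hx)).symm

variable [BorelSpace E] [SecondCountableTopology E] [BorelSpace F] [SecondCountableTopology F]

lemma mutualEnergy_prod_prod {ρ ρ' : Measure E} {σ σ' : Measure F} [IsFiniteMeasure ρ]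
    [IsFiniteMeasure ρ'] [IsFiniteMeasure σ] [IsFiniteMeasure σ'] (hρ : Integrable id ρ)
    (hρ' : Integrable id ρ') (hσ : Integrable id σ) (hσ' : Integrable id σ') :
    mutualEnergy (ρ.prod σ) (ρ'.prod σ') =
      (∫ x, ‖x.1 - x.2‖ ∂(ρ.prod ρ')) * ∫ y, ‖y.1 - y.2‖ ∂(σ.prod σ') := by
  rw [mutualEnergy, integral_prod _ (integrable_norm_sub_mul_norm_sub
      (integrable_one_add_norm_mul_prod hρ hσ) (integrable_one_add_norm_mul_prod hρ' hσ')),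
    integral_prod _ (integrable_norm_sub_prod hρ hρ'),
    integral_prod _ (integrable_norm_sub_prod hσ hσ'), ← integral_prod_mul]
  exact integral_congr_ae (.of_forall fun z =>
    integral_prod_mul (fun x => ‖z.1 - x‖) (fun y => ‖z.2 - y‖))

variable {ρ : Measure (E × F)}

lemma integrable_one_add_norm_mul_of_norm_sub [IsFiniteMeasure ρ]
    (hfst : Integrable Prod.fst ρ) (hsnd : Integrable Prod.snd ρ) (x₀ : E) (y₀ : F)
    (h : Integrable (fun z => ‖z.1 - x₀‖ * ‖z.2 - y₀‖) ρ) :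
    Integrable (fun z => (1 + ‖z.1‖) * (1 + ‖z.2‖)) ρ := by
  have hfst_int : Integrable (fun z => ‖z.1 - x₀‖) ρ := (hfst.sub (integrable_const x₀)).norm
  have hsnd_int : Integrable (fun z => ‖z.2 - y₀‖) ρ := (hsnd.sub (integrable_const y₀)).norm
  have hbound_int : Integrable
      (fun z => (1 + ‖x₀‖ + ‖z.1 - x₀‖) * (1 + ‖y₀‖ + ‖z.2 - y₀‖)) ρ := by
    refine ((((integrable_const ((1 + ‖x₀‖) * (1 + ‖y₀‖))).add
      (hsnd_int.const_mul (1 + ‖x₀‖))).add (hfst_int.mul_const (1 + ‖y₀‖))).add h).congr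
      (.of_forall fun z => ?_)
    simp only [Pi.add_apply]
    ring
  refine hbound_int.mono' (by fun_prop) (.of_forall fun z => ?_)
  rw [Real.norm_of_nonneg (by positivity), add_assoc, add_assoc]
  gcongr
  · exact norm_le_norm_add_norm_sub' z.1 x₀
  · exact norm_le_norm_add_norm_sub' z.2 y₀

lemma mutualEnergy_eq_zero_of_not_integrable [IsFiniteMeasure ρ] {σ : Measure (E × F)} [NeZero σ]
    [SFinite σ] (hfst : Integrable Prod.fst ρ) (hsnd : Integrable Prod.snd ρ)
    (h : ¬Integrable (fun z => (1 + ‖z.1‖) * (1 + ‖z.2‖)) ρ) : mutualEnergy ρ σ = 0 := by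
  refine integral_undef fun hint => h ?_
  obtain ⟨z₀, hz₀⟩ := hint.prod_left_ae.exists
  exact integrable_one_add_norm_mul_of_norm_sub hfst hsnd z₀.1 z₀.2 hz₀

variable [IsProbabilityMeasure ρ]

lemma mutualEnergy_prod_marginals_ne_zero (hfst : Integrable Prod.fst ρ)
    (hsnd : Integrable Prod.snd ρ)
    (h : ¬Integrable (fun z => (1 + ‖z.1‖) * (1 + ‖z.2‖)) ρ) :
    mutualEnergy (ρ.fst.prod ρ.snd) (ρ.fst.prod ρ.snd) ≠ 0 := by
  have hfst_id : Integrable id ρ.fst := integrable_id_map measurable_fst hfst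
  have hsnd_id : Integrable id ρ.snd := integrable_id_map measurable_snd hsnd
  rw [mutualEnergy_prod_prod hfst_id hfst_id hsnd_id hsnd_id]
  refine fun hzero => h ?_
  suffices ∃ x₀ y₀, (fun z : E × F => ‖z.1 - x₀‖ * ‖z.2 - y₀‖) =ᵐ[ρ] 0 by
    obtain ⟨x₀, y₀, hzero⟩ := this
    exact integrable_one_add_norm_mul_of_norm_sub hfst hsnd x₀ y₀
      ((integrable_zero _ _ _).congr hzero.symm)
  rcases mul_eq_zero.1 hzero with hzero | hzero
  · obtain ⟨x₀, hx₀⟩ := exists_ae_eq_of_integral_norm_sub_eq_zero hfst_id hzero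
    refine ⟨x₀, 0, ?_⟩
    filter_upwards [ae_of_ae_map measurable_fst.aemeasurable hx₀] with z hz
    simp [hz]
  · obtain ⟨y₀, hy₀⟩ := exists_ae_eq_of_integral_norm_sub_eq_zero hsnd_id hzero
    refine ⟨0, y₀, ?_⟩
    filter_upwards [ae_of_ae_map measurable_snd.aemeasurable hy₀] with z hz
    simp [hz]

theorem energyDiscrepancy_prod_marginals_pos_of_not_integrable (hfst : Integrable Prod.fst ρ)
    (hsnd : Integrable Prod.snd ρ)
    (h : ¬Integrable (fun z => (1 + ‖z.1‖) * (1 + ‖z.2‖)) ρ) :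
    0 < energyDiscrepancy ρ (ρ.fst.prod ρ.snd) := by
  rw [energyDiscrepancy, mutualEnergy_eq_zero_of_not_integrable hfst hsnd h,
    mutualEnergy_eq_zero_of_not_integrable hfst hsnd h, zero_add, mul_zero, sub_zero]
  exact (integral_nonneg fun _ => by positivity).lt_of_ne'
    (mutualEnergy_prod_marginals_ne_zero hfst hsnd h)

end ProductOfMarginals

section DistanceCovariance

variable {Ω E F : Type*} [MeasurableSpace Ω] [NormedAddCommGroup E] [MeasurableSpace E]
  [BorelSpace E] [SecondCountableTopology E] [NormedAddCommGroup F] [MeasurableSpace F]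
  [BorelSpace F] [SecondCountableTopology F] {μ : Measure Ω} {U : Ω → E} {V : Ω → F}

lemma integral_norm_sub_map_prod_map [SFinite μ] (hU : Measurable U) :
    ∫ x, ‖x.1 - x.2‖ ∂((μ.map U).prod (μ.map U)) = ∫ ω, ‖U ω.1 - U ω.2‖ ∂(μ.prod μ) := by
  rw [Measure.map_prod_map _ _ hU hU, integral_map (by fun_prop) (by fun_prop)]
  rfl

lemma mutualEnergy_prod_map_self [IsFiniteMeasure μ] (hU : Measurable U) (hV : Measurable V)
    (hUint : Integrable U μ) (hVint : Integrable V μ) :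
    mutualEnergy ((μ.map U).prod (μ.map V)) ((μ.map U).prod (μ.map V)) =
      (∫ ω, ‖U ω.1 - U ω.2‖ ∂(μ.prod μ)) * ∫ ω, ‖V ω.1 - V ω.2‖ ∂(μ.prod μ) := by
  have hU_id := integrable_id_map hU hUint
  have hV_id := integrable_id_map hV hVint
  rw [mutualEnergy_prod_prod hU_id hU_id hV_id hV_id, integral_norm_sub_map_prod_map hU,
    integral_norm_sub_map_prod_map hV]

theorem dcov2_eq_energyDiscrepancy [IsFiniteMeasure μ] (hU : Measurable U) (hV : Measurable V)
    (hUint : Integrable U μ) (hVint : Integrable V μ) :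
    dcov2 μ U V =
      energyDiscrepancy (μ.map fun ω => (U ω, V ω)) ((μ.map U).prod (μ.map V)) := by
  have hUV : Measurable fun ω => (U ω, V ω) := hU.prodMk hV
  have hcross : mutualEnergy (μ.map fun ω => (U ω, V ω)) ((μ.map U).prod (μ.map V)) =
      ∫ ω, ‖U ω.1 - U ω.2.1‖ * ‖V ω.1 - V ω.2.2‖ ∂(μ.prod (μ.prod μ)) := by
    rw [Measure.map_prod_map _ _ hU hV, mutualEnergy_map_map hUV (hU.prodMap hV)]
    rfl
  have hswap : ∫ ω, ‖U ω.1 - U ω.2.2‖ * ‖V ω.1 - V ω.2.1‖ ∂(μ.prod (μ.prod μ)) =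
      ∫ ω, ‖U ω.1 - U ω.2.1‖ * ‖V ω.1 - V ω.2.2‖ ∂(μ.prod (μ.prod μ)) :=
    ((MeasurePreserving.id μ).prod Measure.measurePreserving_swap).integral_comp'
      (f := (MeasurableEquiv.refl Ω).prodCongr MeasurableEquiv.prodComm)
      fun ω => ‖U ω.1 - U ω.2.1‖ * ‖V ω.1 - V ω.2.2‖
  rw [dcov2, energyDiscrepancy, mutualEnergy_map_map hUV hUV,
    mutualEnergy_prod_map_self hU hV hUint hVint, hcross, hswap]
  ring

end DistanceCovariance

section FiniteDimensional

variable {E F : Type*} [NormedAddCommGroup E] [InnerProductSpace ℝ E] [FiniteDimensional ℝ E]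
  [MeasurableSpace E] [BorelSpace E] [NormedAddCommGroup F] [InnerProductSpace ℝ F]
  [FiniteDimensional ℝ F] [MeasurableSpace F] [BorelSpace F]

theorem energyDiscrepancy_nonpos_iff {ρ σ : Measure (E × F)} [IsProbabilityMeasure ρ]
    [IsProbabilityMeasure σ] (hρ : Integrable (fun z => (1 + ‖z.1‖) * (1 + ‖z.2‖)) ρ)
    (hσ : Integrable (fun z => (1 + ‖z.1‖) * (1 + ‖z.2‖)) σ)
    (hfst : ρ.fst = σ.fst) (hsnd : ρ.snd = σ.snd) :
    energyDiscrepancy ρ σ ≤ 0 ↔ ρ = σ := by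
  obtain ⟨m, _, _, _, hm⟩ := exists_representsNorm E
  obtain ⟨n, _, _, _, hn⟩ := exists_representsNorm F
  have hd_nonneg : 0 ≤ fun z => ‖jointCharFun ρ z - jointCharFun σ z‖ ^ 2 :=
    fun z => sq_nonneg _
  rw [energyDiscrepancy_eq_integral hm hn hρ hσ hfst hsnd,
    (integral_nonneg hd_nonneg).ge_iff_eq',
    integral_eq_zero_iff_of_nonneg hd_nonneg
      (integrable_sq_norm_jointCharFun_sub hm hn hρ hσ hfst hsnd),
    (continuous_sq_norm_jointCharFun_sub ρ σ).ae_eq_iff_eq _ continuous_zero]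
  refine ⟨fun h => jointCharFun_injective (funext fun z => ?_), fun h => ?_⟩
  · simpa [sub_eq_zero] using congrFun h z
  · ext z
    simp [h]

theorem energyDiscrepancy_prod_marginals_nonpos_iff {ρ : Measure (E × F)} [IsProbabilityMeasure ρ]
    (hfst : Integrable Prod.fst ρ) (hsnd : Integrable Prod.snd ρ) :
    energyDiscrepancy ρ (ρ.fst.prod ρ.snd) ≤ 0 ↔ ρ = ρ.fst.prod ρ.snd := by
  have hprod : Integrable (fun z => (1 + ‖z.1‖) * (1 + ‖z.2‖)) (ρ.fst.prod ρ.snd) :=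
    integrable_one_add_norm_mul_prod (integrable_id_map measurable_fst hfst)
      (integrable_id_map measurable_snd hsnd)
  by_cases hρ : Integrable (fun z => (1 + ‖z.1‖) * (1 + ‖z.2‖)) ρ
  · exact energyDiscrepancy_nonpos_iff hρ hprod (by simp) (by simp)
  · have hpos := energyDiscrepancy_prod_marginals_pos_of_not_integrable hfst hsnd hρ
    exact iff_of_false hpos.not_ge fun h => hρ (h ▸ hprod)

theorem dcov2_eq_zero_iff_indepFun_general {Ω : Type*} [MeasurableSpace Ω] {μ : Measure Ω}
    [IsProbabilityMeasure μ] {U : Ω → E} {V : Ω → F} (hU : Measurable U) (hV : Measurable V)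
    (hUint : Integrable U μ) (hVint : Integrable V μ) :
    √(dcov2 μ U V) = 0 ↔ IndepFun U V μ := by
  have hUV : AEMeasurable (fun ω => (U ω, V ω)) μ := by fun_prop
  have : IsProbabilityMeasure (μ.map fun ω => (U ω, V ω)) := Measure.isProbabilityMeasure_map hUV
  have hlaw := energyDiscrepancy_prod_marginals_nonpos_iff
    (ρ := μ.map fun ω => (U ω, V ω))
    ((integrable_map_measure (by fun_prop) hUV).2 hUint)
    ((integrable_map_measure (by fun_prop) hUV).2 hVint)
  rw [Measure.fst_map_prodMk hV, Measure.snd_map_prodMk hU] at hlaw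
  rw [Real.sqrt_eq_zero', dcov2_eq_energyDiscrepancy hU hV hUint hVint, hlaw,
    indepFun_iff_map_prod_eq_prod_map_map hU.aemeasurable hV.aemeasurable]

end FiniteDimensional

/-- The distance covariance of two random vectors with finite first moments vanishes
if and only if they are independent. -/
theorem dcov2_eq_zero_iff_indepFun {Ω : Type*} [MeasurableSpace Ω] (μ : Measure Ω)
    [IsProbabilityMeasure μ]
    {p q : ℕ} (U : Ω → EuclideanSpace ℝ (Fin p)) (V : Ω → EuclideanSpace ℝ (Fin q))
    (hU : Measurable U) (hV : Measurable V)
    (hUint : Integrable (fun ω => ‖U ω‖) μ) (hVint : Integrable (fun ω => ‖V ω‖) μ) :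
    Real.sqrt (dcov2 μ U V) = 0 ↔ IndepFun U V μ :=
  dcov2_eq_zero_iff_indepFun_general hU hV
    ((integrable_norm_iff hU.aestronglyMeasurable).1 hUint)
    ((integrable_norm_iff hV.aestronglyMeasurable).1 hVint)
end
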